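/- arXiv:0708.1922 — 2 statements merged into one kernel-verified Lean document; each statement's English description precedes it below -/
import Mathlib

section
/- Let A, B, C be a maximal positive solution of the E(1,1) negative cross curvature flow ODE system with A_0 > C_0 > 0 and 3 C_0 > A_0. Set E_0 = 16(3C_0 - A_0)/A_0 > 0. Then along the solution B (dB/dt) ∈ (-128, -E_0); consequently there exists a finite time T_0 > 0 such that the solution exists on [0, T_0), B(t) → 0 as t → T_0^-, the bounds 2 E_0 (T_0 - t) < B(t)^2 < 256 (T_0 - t) hold for t ∈ [0, T_0), and A(t), C(t) → ∞ as t → T_0^-. -/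
/-- A triple of functions solves the `E(1,1)` negative cross curvature flow ODE system
(with positivity) on a set `s ⊆ ℝ`. -/
def IsSolE11 (A B C : ℝ → ℝ) (s : Set ℝ) : Prop :=
  ∀ t ∈ s,
    (0 < A t ∧ 0 < B t ∧ 0 < C t) ∧
    HasDerivAt A
      (2 * A t * (A t + C t) ^ 3 * (3 * C t - A t) / (A t * B t * C t) ^ 2) t ∧
    HasDerivAt B
      (-2 * B t * (3 * A t - C t) * (3 * C t - A t) * (A t + C t) ^ 2 /
        (A t * B t * C t) ^ 2) t ∧
    HasDerivAt C
      (2 * C t * (A t + C t) ^ 3 * (3 * A t - C t) / (A t * B t * C t) ^ 2) t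

/-- A maximal solution of the `E(1,1)` system on `{t | 0 ≤ t, t < T}` (`T ∈ (0,∞]` an
extended real): it is a solution that admits no extension to a strictly larger interval. -/
def IsMaxSolE11 (A B C : ℝ → ℝ) (T : EReal) : Prop :=
  IsSolE11 A B C {t : ℝ | 0 ≤ t ∧ (t : EReal) < T} ∧
  ∀ (A' B' C' : ℝ → ℝ) (T' : EReal), T < T' →
    IsSolE11 A' B' C' {t : ℝ | 0 ≤ t ∧ (t : EReal) < T'} →
    ¬ (∀ t : ℝ, 0 ≤ t → (t : EReal) < T → A' t = A t ∧ B' t = B t ∧ C' t = C t)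

/-!
The function `(A - C)² A C` is constant along the flow, so `A > C` persists; then `A / C` decreases,
and the solution never leaves the cone `C < A < 3C`. There `-B B'` depends only on `A / C` and lies
between `E₀` and `32`, so `B²` decreases at a rate bounded below and the lifetime `T₀` is finite.

Inside the cone `A B` decreases while `C B` increases, whence `C₀ B₀ ≤ C B < A B ≤ A₀ B₀`. If `B`
had a positive limit at `T₀`, then `A B`, `C B` and hence `(A, B, C)` would converge in the positive
octant, and the Picard–Lindelöf theorem would continue the solution past `T₀`. Therefore `B → 0`:
the two-sided bound on `B²` is the mean value theorem on `[t, T₀)`, and `C₀ B₀ ≤ C B < A B` forces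
`A` and `C` to blow up.
-/

section

open Set Filter Topology

/-! ### Monotone functions and left limits -/

lemma monotoneOn_of_hasDerivAt_nonneg {S : Set ℝ} (hS : Convex ℝ S) {f f' : ℝ → ℝ}
    (hf : ∀ t ∈ S, HasDerivAt f (f' t) t) (hf' : ∀ t ∈ S, 0 ≤ f' t) : MonotoneOn f S :=
  monotoneOn_of_hasDerivWithinAt_nonneg hS
    (fun t ht ↦ (hf t ht).continuousAt.continuousWithinAt)
    (fun t ht ↦ (hf t (interior_subset ht)).hasDerivWithinAt)
    (fun t ht ↦ hf' t (interior_subset ht))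

lemma antitoneOn_of_hasDerivAt_nonpos {S : Set ℝ} (hS : Convex ℝ S) {f f' : ℝ → ℝ}
    (hf : ∀ t ∈ S, HasDerivAt f (f' t) t) (hf' : ∀ t ∈ S, f' t ≤ 0) : AntitoneOn f S :=
  antitoneOn_of_hasDerivWithinAt_nonpos hS
    (fun t ht ↦ (hf t ht).continuousAt.continuousWithinAt)
    (fun t ht ↦ (hf t (interior_subset ht)).hasDerivWithinAt)
    (fun t ht ↦ hf' t (interior_subset ht))

section LeftLimit

variable {α β : Type*} [LinearOrder α] [DenselyOrdered α] [TopologicalSpace α] [OrderTopology α]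
  [ConditionallyCompleteLinearOrder β] [TopologicalSpace β] [OrderTopology β]
  {f : α → β} {a b : α} {m M : β}

lemma exists_mem_Icc_tendsto_nhdsLT_of_monotoneOn (hab : a < b) (hf : MonotoneOn f (Ico a b))
    (hmaps : MapsTo f (Ico a b) (Icc m M)) : ∃ l ∈ Icc m M, Tendsto f (𝓝[<] b) (𝓝 l) := by
  have hlim := (hf.mono Ioo_subset_Ico_self).tendsto_nhdsWithin_Ioo_left (nonempty_Ioo.2 hab)
    (bddAbove_Icc.mono (hmaps.mono_left Ioo_subset_Ico_self).image_subset)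
  have : (𝓝[<] b).NeBot := nhdsLT_neBot_of_exists_lt ⟨a, hab⟩
  exact ⟨_, isClosed_Icc.mem_of_tendsto hlim (mem_of_superset (Ico_mem_nhdsLT hab) hmaps), hlim⟩

lemma exists_mem_Icc_tendsto_nhdsLT_of_antitoneOn (hab : a < b) (hf : AntitoneOn f (Ico a b))
    (hmaps : MapsTo f (Ico a b) (Icc m M)) : ∃ l ∈ Icc m M, Tendsto f (𝓝[<] b) (𝓝 l) := by
  obtain ⟨l, hl, hlim⟩ := exists_mem_Icc_tendsto_nhdsLT_of_monotoneOn (β := βᵒᵈ)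
    (m := OrderDual.toDual M) (M := OrderDual.toDual m) hab hf.dual_right
    fun t ht ↦ (hmaps ht).symm
  exact ⟨l, hl.symm, hlim⟩

end LeftLimit

lemma exists_hasDerivAt_mul_eq_sub_of_tendsto_nhdsLT {f f' : ℝ → ℝ} {a b l : ℝ} (hab : a < b)
    (hf : ∀ t ∈ Ico a b, HasDerivAt f (f' t) t) (hl : Tendsto f (𝓝[<] b) (𝓝 l)) :
    ∃ c ∈ Ioo a b, (b - a) * f' c = l - f a := by
  obtain ⟨c, hc, hslope⟩ := exists_ratio_hasDerivAt_eq_ratio_slope' f f' hab id 1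
    (fun t ht ↦ hf t (Ioo_subset_Ico_self ht)) (fun t _ ↦ hasDerivAt_id t)
    ((hf a (left_mem_Ico.2 hab)).continuousAt.mono_left nhdsWithin_le_nhds)
    (continuousAt_id.mono_left nhdsWithin_le_nhds) hl
    (continuousAt_id.mono_left nhdsWithin_le_nhds)
  exact ⟨c, hc, by simpa using hslope⟩

/-! ### Continuation of integral curves -/

section Continuation

variable {E : Type*} [NormedAddCommGroup E] [NormedSpace ℝ E] {a T : ℝ} {u w : ℝ → E}

lemma hasDerivAt_piecewise_Iio_of_tendsto {u' : ℝ → E} {e : E}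
    (hu : ∀ᶠ t in 𝓝[<] T, HasDerivAt u (u' t) t) (hu_lim : Tendsto u (𝓝[<] T) (𝓝 (w T)))
    (hu'_lim : Tendsto u' (𝓝[<] T) (𝓝 e)) (hw : HasDerivWithinAt w e (Ici T) T) :
    HasDerivAt ((Iio T).piecewise u w) e T := by
  set v := (Iio T).piecewise u w
  have hvw : EqOn v w (Ici T) := fun t ht ↦ piecewise_eq_of_notMem _ _ _ (notMem_Iio.2 ht)
  have hv : ∀ᶠ t in 𝓝[<] T, HasDerivAt v (u' t) t := by
    filter_upwards [hu, self_mem_nhdsWithin] with t ht htT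
    exact ht.congr_of_eventuallyEq ((piecewise_eqOn _ u w).eventuallyEq_of_mem (Iio_mem_nhds htT))
  have hv_lim : Tendsto v (𝓝[<] T) (𝓝 (v T)) := by
    rw [hvw self_mem_Ici]
    exact hu_lim.congr' ((piecewise_eqOn _ u w).symm.eventuallyEq_of_mem self_mem_nhdsWithin)
  have hleft : HasDerivWithinAt v e (Iic T) T :=
    hasDerivWithinAt_Iic_of_tendsto_deriv
      (fun t ht ↦ ht.1.differentiableAt.differentiableWithinAt)
      (hv_lim.mono_left (nhdsWithin_mono _ fun t ht ↦ ht.2)) (hv.and self_mem_nhdsWithin)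
      (hu'_lim.congr' (hv.mono fun t ht ↦ ht.deriv.symm))
  simpa using hleft.union (hw.congr hvw (hvw self_mem_Ici))

lemma exists_extension_of_tendsto_nhdsLT [CompleteSpace E] {F : E → E} {p : E} {U : Set E}
    (haT : a < T) (hu : ∀ t ∈ Ico a T, HasDerivAt u (F (u t)) t)
    (hlim : Tendsto u (𝓝[<] T) (𝓝 p)) (hF : ContDiffAt ℝ 1 F p) (hU : U ∈ 𝓝 p) :
    ∃ v : ℝ → E, ∃ T' > T, EqOn v u (Iio T) ∧ (∀ t ∈ Ico T T', v t ∈ U) ∧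
      ∀ t ∈ Ico a T', HasDerivAt v (F (v t)) t := by
  obtain ⟨w, rfl, ε, hε, hw⟩ :=
    hF.exists_forall_mem_closedBall_exists_eq_forall_mem_Ioo_hasDerivAt₀ T
  have hwT : HasDerivAt w (F (w T)) T := hw T ⟨by linarith, by linarith⟩
  obtain ⟨T', hT', hwT'⟩ := mem_nhdsGE_iff_exists_Ico_subset.1 <| mem_nhdsWithin_of_mem_nhds <|
    inter_mem (Ioo_mem_nhds (sub_lt_self T hε) (lt_add_of_pos_right T hε))
      (hwT.continuousAt.preimage_mem_nhds hU)
  set v := (Iio T).piecewise u w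
  have hvu : EqOn v u (Iio T) := piecewise_eqOn _ _ _
  have hvw : EqOn v w (Ici T) := fun t ht ↦ piecewise_eq_of_notMem _ _ _ (notMem_Iio.2 ht)
  refine ⟨v, T', hT', hvu, fun t ht ↦ ?_, fun t ht ↦ ?_⟩
  · rw [hvw ht.1]
    exact (hwT' ht).2
  rcases lt_trichotomy t T with htT | rfl | hTt
  · rw [hvu htT]
    exact (hu t ⟨ht.1, htT⟩).congr_of_eventuallyEq (hvu.eventuallyEq_of_mem (Iio_mem_nhds htT))
  · rw [hvw self_mem_Ici]
    exact hasDerivAt_piecewise_Iio_of_tendsto (mem_of_superset (Ico_mem_nhdsLT haT) hu) hlim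
      (hF.continuousAt.tendsto.comp hlim) hwT.hasDerivWithinAt
  · rw [hvw hTt.le]
    exact (hw t (hwT' ⟨hTt.le, ht.2⟩).1).congr_of_eventuallyEq
      (hvw.eventuallyEq_of_mem (Ici_mem_nhds hTt))

end Continuation

/-! ### Intervals with an extended-real endpoint -/

lemma setOf_nonneg_and_coe_lt_coe (T : ℝ) :
    {t : ℝ | 0 ≤ t ∧ (t : EReal) < (T : EReal)} = Ico 0 T := by
  ext t
  simp

lemma convex_setOf_nonneg_and_coe_lt (T : EReal) :
    Convex ℝ {t : ℝ | 0 ≤ t ∧ (t : EReal) < T} :=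
  (ordConnected_Ici.inter
    (ordConnected_Iio.preimage_mono EReal.coe_strictMono.monotone)).convex

lemma exists_real_eq_of_forall_coe_lt_le {T : EReal} {K : ℝ} (hT : 0 < T)
    (hK : ∀ t : ℝ, 0 ≤ t → (t : EReal) < T → t ≤ K) : ∃ T₀ : ℝ, 0 < T₀ ∧ T = T₀ := by
  have hT_top : T ≠ ⊤ := by
    rintro rfl
    have := hK (max K 0 + 1) (by positivity) (EReal.coe_lt_top _)
    linarith [le_max_left K 0]
  lift T to ℝ using ⟨hT_top, hT.ne_bot⟩
  exact ⟨T, by exact_mod_cast hT, rfl⟩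

/-! ### The flow on the positive octant -/

/-- The domain `A, B, C > 0` of the flow. -/
def octantE11 : Set (ℝ × ℝ × ℝ) := Ioi 0 ×ˢ Ioi 0 ×ˢ Ioi 0

/-- The vector field of the flow on triples `(A, B, C)`. -/
noncomputable def fieldE11 (p : ℝ × ℝ × ℝ) : ℝ × ℝ × ℝ :=
  (2 * p.1 * (p.1 + p.2.2) ^ 3 * (3 * p.2.2 - p.1) / (p.1 * p.2.1 * p.2.2) ^ 2,
    -2 * p.2.1 * (3 * p.1 - p.2.2) * (3 * p.2.2 - p.1) * (p.1 + p.2.2) ^ 2 /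
      (p.1 * p.2.1 * p.2.2) ^ 2,
    2 * p.2.2 * (p.1 + p.2.2) ^ 3 * (3 * p.1 - p.2.2) / (p.1 * p.2.1 * p.2.2) ^ 2)

lemma isOpen_octantE11 : IsOpen octantE11 :=
  isOpen_Ioi.prod (isOpen_Ioi.prod isOpen_Ioi)

lemma contDiffAt_fieldE11 {p : ℝ × ℝ × ℝ} (hp : p ∈ octantE11) : ContDiffAt ℝ 1 fieldE11 p := by
  obtain ⟨hA, hB, hC⟩ : 0 < p.1 ∧ 0 < p.2.1 ∧ 0 < p.2.2 := hp
  have hden : (p.1 * p.2.1 * p.2.2) ^ 2 ≠ 0 := by positivity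
  unfold fieldE11
  refine ContDiffAt.prodMk ?_ (ContDiffAt.prodMk ?_ ?_)
  all_goals exact ContDiffAt.div (by fun_prop) (by fun_prop) hden

lemma isSolE11_iff {u : ℝ → ℝ × ℝ × ℝ} {S : Set ℝ} :
    IsSolE11 (fun t ↦ (u t).1) (fun t ↦ (u t).2.1) (fun t ↦ (u t).2.2) S ↔
      ∀ t ∈ S, u t ∈ octantE11 ∧ HasDerivAt u (fieldE11 (u t)) t := by
  refine forall₂_congr fun t _ ↦ and_congr Iff.rfl ⟨fun ⟨hA, hB, hC⟩ ↦ ?_, fun hu ↦ ?_⟩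
  · exact hA.prodMk (hB.prodMk hC)
  · exact ⟨hu.fst, hu.snd.fst, hu.snd.snd⟩

lemma IsMaxSolE11.not_tendsto_mem_octantE11 {A B C : ℝ → ℝ} {T : ℝ} {p : ℝ × ℝ × ℝ}
    (hmax : IsMaxSolE11 A B C T) (hT : 0 < T) (hp : p ∈ octantE11) :
    ¬Tendsto (fun t ↦ (A t, B t, C t)) (𝓝[<] T) (𝓝 p) := by
  intro hlim
  obtain ⟨hsol, hno_extension⟩ := hmax
  simp only [setOf_nonneg_and_coe_lt_coe] at hsol hno_extension
  have hu := (isSolE11_iff (u := fun t ↦ (A t, B t, C t))).1 hsol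
  obtain ⟨v, T', hT', hvu, hv_mem, hv⟩ := exists_extension_of_tendsto_nhdsLT hT
    (fun t ht ↦ (hu t ht).2) hlim (contDiffAt_fieldE11 hp) (isOpen_octantE11.mem_nhds hp)
  have hv_sol : ∀ t ∈ Ico 0 T', v t ∈ octantE11 ∧ HasDerivAt v (fieldE11 (v t)) t := by
    refine fun t ht ↦ ⟨?_, hv t ht⟩
    rcases lt_or_ge t T with htT | hTt
    · exact hvu htT ▸ (hu t ⟨ht.1, htT⟩).1
    · exact hv_mem t ⟨hTt, ht.2⟩
  refine hno_extension _ _ _ T' (by exact_mod_cast hT')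
    (by simpa only [setOf_nonneg_and_coe_lt_coe] using isSolE11_iff.2 hv_sol) fun t _ htT ↦ ?_
  simp [hvu (show t ∈ Iio T by exact_mod_cast htT)]

/-! ### Derivatives along the flow -/

/-- The factor `(A + C)² / (ABC)²` common to the three equations of the flow. -/
noncomputable def rateE11 (x y z : ℝ) : ℝ :=
  (x + z) ^ 2 / (x * y * z) ^ 2

lemma rateE11_pos {x y z : ℝ} (hx : 0 < x) (hy : 0 < y) (hz : 0 < z) : 0 < rateE11 x y z := by
  unfold rateE11
  positivity

/-- The quantity `-B B'`, which along the flow is a function of `A` and `C` only. -/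
noncomputable def decayE11 (x z : ℝ) : ℝ :=
  2 * (3 * x - z) * (3 * z - x) * (x + z) ^ 2 / (x * z) ^ 2

namespace IsSolE11

variable {A B C : ℝ → ℝ} {S : Set ℝ} {a t : ℝ}

lemma A_pos (h : IsSolE11 A B C S) (ht : t ∈ S) : 0 < A t := (h t ht).1.1

lemma B_pos (h : IsSolE11 A B C S) (ht : t ∈ S) : 0 < B t := (h t ht).1.2.1

lemma C_pos (h : IsSolE11 A B C S) (ht : t ∈ S) : 0 < C t := (h t ht).1.2.2

lemma rate_pos (h : IsSolE11 A B C S) (ht : t ∈ S) : 0 < rateE11 (A t) (B t) (C t) :=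
  rateE11_pos (h.A_pos ht) (h.B_pos ht) (h.C_pos ht)

lemma hasDerivAt_A (h : IsSolE11 A B C S) (ht : t ∈ S) :
    HasDerivAt A (2 * A t * (A t + C t) * (3 * C t - A t) * rateE11 (A t) (B t) (C t)) t :=
  (h t ht).2.1.congr_deriv (by unfold rateE11; ring)

lemma hasDerivAt_B (h : IsSolE11 A B C S) (ht : t ∈ S) :
    HasDerivAt B (-2 * B t * (3 * A t - C t) * (3 * C t - A t) * rateE11 (A t) (B t) (C t)) t :=
  (h t ht).2.2.1.congr_deriv (by unfold rateE11; ring)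

lemma hasDerivAt_C (h : IsSolE11 A B C S) (ht : t ∈ S) :
    HasDerivAt C (2 * C t * (A t + C t) * (3 * A t - C t) * rateE11 (A t) (B t) (C t)) t :=
  (h t ht).2.2.2.congr_deriv (by unfold rateE11; ring)

lemma hasDerivAt_A_mul_B (h : IsSolE11 A B C S) (ht : t ∈ S) :
    HasDerivAt (fun t ↦ A t * B t) (-(4 * (A t * B t) * (A t - C t) * (3 * C t - A t) *
      rateE11 (A t) (B t) (C t))) t :=
  ((h.hasDerivAt_A ht).fun_mul (h.hasDerivAt_B ht)).congr_deriv (by ring)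

lemma hasDerivAt_C_mul_B (h : IsSolE11 A B C S) (ht : t ∈ S) :
    HasDerivAt (fun t ↦ C t * B t)
      (4 * (C t * B t) * (A t - C t) * (3 * A t - C t) * rateE11 (A t) (B t) (C t)) t :=
  ((h.hasDerivAt_C ht).fun_mul (h.hasDerivAt_B ht)).congr_deriv (by ring)

lemma hasDerivAt_A_div_C (h : IsSolE11 A B C S) (ht : t ∈ S) :
    HasDerivAt (fun t ↦ A t / C t)
      (-(8 * (A t / C t) * (A t + C t) * (A t - C t) * rateE11 (A t) (B t) (C t))) t := by
  have hC := (h.C_pos ht).ne'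
  refine ((h.hasDerivAt_A ht).fun_div (h.hasDerivAt_C ht) hC).congr_deriv ?_
  field_simp
  ring

lemma mul_deriv_B (h : IsSolE11 A B C S) (ht : t ∈ S) :
    B t * deriv B t = -decayE11 (A t) (C t) := by
  have hB := (h.B_pos ht).ne'
  rw [(h.hasDerivAt_B ht).deriv]
  unfold rateE11 decayE11
  field_simp

lemma hasDerivAt_B_sq (h : IsSolE11 A B C S) (ht : t ∈ S) :
    HasDerivAt (fun t ↦ B t ^ 2) (-2 * decayE11 (A t) (C t)) t := by
  refine ((h.hasDerivAt_B ht).differentiableAt.hasDerivAt.fun_pow 2).congr_deriv ?_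
  linear_combination 2 * h.mul_deriv_B ht

lemma sq_sub_mul_mul_eq (h : IsSolE11 A B C S) (hS : Convex ℝ S) (ha : a ∈ S) (ht : t ∈ S) :
    (A t - C t) ^ 2 * (A t * C t) = (A a - C a) ^ 2 * (A a * C a) := by
  have hderiv : ∀ s ∈ S, HasDerivAt (fun s ↦ (A s - C s) ^ 2 * (A s * C s)) 0 s := fun s hs ↦ by
    have hA := h.hasDerivAt_A hs
    have hC := h.hasDerivAt_C hs
    exact (((hA.fun_sub hC).fun_pow 2).fun_mul (hA.fun_mul hC)).congr_deriv (by push_cast; ring)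
  have hnorm := hS.norm_image_sub_le_of_norm_hasDerivWithin_le (C := 0)
    (fun s hs ↦ (hderiv s hs).hasDerivWithinAt) (fun s _ ↦ norm_zero.le) ha ht
  rwa [zero_mul, norm_le_zero_iff, sub_eq_zero] at hnorm

lemma C_lt_A (h : IsSolE11 A B C S) (hS : Convex ℝ S) (ha : a ∈ S) (hlt : C a < A a)
    (ht : t ∈ S) : C t < A t := by
  by_contra! hle
  obtain ⟨s, hs, hs_eq⟩ : ∃ s ∈ S, A s = C s :=
    hS.isPreconnected.intermediate_value₂ ht ha
      (fun s hs ↦ (h.hasDerivAt_A hs).continuousAt.continuousWithinAt)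
      (fun s hs ↦ (h.hasDerivAt_C hs).continuousAt.continuousWithinAt) hle hlt.le
  have hpos : 0 < (A a - C a) ^ 2 * (A a * C a) :=
    mul_pos (pow_pos (sub_pos.2 hlt) 2) (mul_pos (h.A_pos ha) (h.C_pos ha))
  rw [← h.sq_sub_mul_mul_eq hS ha hs, hs_eq] at hpos
  simp at hpos

lemma antitoneOn_A_div_C (h : IsSolE11 A B C S) (hS : Convex ℝ S) (hlt : ∀ t ∈ S, C t < A t) :
    AntitoneOn (fun t ↦ A t / C t) S := by
  refine antitoneOn_of_hasDerivAt_nonpos hS (fun t ↦ h.hasDerivAt_A_div_C) fun t ht ↦ ?_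
  have := h.A_pos ht
  have := h.C_pos ht
  have := h.rate_pos ht
  have := sub_pos.2 (hlt t ht)
  exact neg_nonpos.2 (by positivity)

lemma monotoneOn_C_mul_B (h : IsSolE11 A B C S) (hS : Convex ℝ S) (hlt : ∀ t ∈ S, C t < A t) :
    MonotoneOn (fun t ↦ C t * B t) S := by
  refine monotoneOn_of_hasDerivAt_nonneg hS (fun t ↦ h.hasDerivAt_C_mul_B) fun t ht ↦ ?_
  have := h.B_pos ht
  have := h.C_pos ht
  have := h.rate_pos ht
  have := sub_pos.2 (hlt t ht)
  have : 0 < 3 * A t - C t := by linarith [h.A_pos ht]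
  positivity

end IsSolE11

/-! ### The cone `C < A < 3C` -/

/-- The constant `E₀` of the theorem as a function of `(A, C)`: the lower bound for
`-B B'` in the cone, which degenerates on the face `A = 3C`. -/
noncomputable def marginE11 (x z : ℝ) : ℝ :=
  16 * (3 * z - x) / x

lemma marginE11_pos {x z : ℝ} (hx : 0 < x) (hxz : x < 3 * z) : 0 < marginE11 x z :=
  div_pos (by linarith) hx

lemma marginE11_le_marginE11 {x z x' z' : ℝ} (hx : 0 < x) (hx' : 0 < x')
    (h : x' * z ≤ x * z') : marginE11 x z ≤ marginE11 x' z' := by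
  unfold marginE11
  rw [div_le_div_iff₀ hx hx']
  linarith

lemma marginE11_lt_decayE11 {x z : ℝ} (hz : 0 < z) (hzx : z < x) (hxz : x < 3 * z) :
    marginE11 x z < decayE11 x z := by
  have hx : 0 < x := hz.trans hzx
  have hsq : (2 * z) ^ 2 < (x + z) ^ 2 := by gcongr; linarith
  have hfactor : 2 * x * (2 * z) ^ 2 < (3 * x - z) * (x + z) ^ 2 := by
    gcongr
    linarith
  unfold marginE11 decayE11
  rw [div_lt_div_iff₀ hx (by positivity)]
  have hpos : 0 < 2 * (3 * z - x) * x := mul_pos (by linarith) hx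
  linarith [mul_lt_mul_of_pos_left hfactor hpos]

lemma decayE11_lt_thirty_two {x z : ℝ} (hx : 0 < x) (hz : 0 < z) (hne : x ≠ z) :
    decayE11 x z < 32 := by
  have : 0 < (x - z) ^ 2 := sq_pos_of_ne_zero (sub_ne_zero.2 hne)
  have hdecay : decayE11 x z =
      32 - (16 * (x * z) * (x - z) ^ 2 + 6 * ((x - z) ^ 2) ^ 2) / (x * z) ^ 2 := by
    unfold decayE11
    field_simp
    ring
  rw [hdecay]
  exact sub_lt_self _ (by positivity)

/-- A solution on an interval `S` that stays in the open cone `C < A < 3C`. -/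
structure IsConeSolE11 (A B C : ℝ → ℝ) (S : Set ℝ) : Prop where
  sol : IsSolE11 A B C S
  convex : Convex ℝ S
  C_lt_A : ∀ t ∈ S, C t < A t
  A_lt_three_mul_C : ∀ t ∈ S, A t < 3 * C t

lemma IsSolE11.isConeSolE11 {A B C : ℝ → ℝ} {S : Set ℝ} {a : ℝ} (h : IsSolE11 A B C S)
    (hS : Convex ℝ S) (ha : IsLeast S a) (hCA : C a < A a) (hA3C : A a < 3 * C a) :
    IsConeSolE11 A B C S := by
  have hlt : ∀ t ∈ S, C t < A t := fun t ↦ h.C_lt_A hS ha.1 hCA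
  refine ⟨h, hS, hlt, fun t ht ↦ ?_⟩
  rw [← div_lt_iff₀ (h.C_pos ht)]
  calc A t / C t ≤ A a / C a := h.antitoneOn_A_div_C hS hlt ha.1 ht (ha.2 ht)
    _ < 3 := (div_lt_iff₀ (h.C_pos ha.1)).2 hA3C

namespace IsConeSolE11

variable {A B C : ℝ → ℝ} {S : Set ℝ} {a t T : ℝ}

lemma margin_pos (h : IsConeSolE11 A B C S) (ht : t ∈ S) : 0 < marginE11 (A t) (C t) :=
  marginE11_pos (h.sol.A_pos ht) (h.A_lt_three_mul_C t ht)

lemma decay_mem_Ioo (h : IsConeSolE11 A B C S) (ha : a ∈ S) (ht : t ∈ S) (hat : a ≤ t) :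
    decayE11 (A t) (C t) ∈ Ioo (marginE11 (A a) (C a)) 32 := by
  have hratio := h.sol.antitoneOn_A_div_C h.convex h.C_lt_A ha ht hat
  have hmargin : marginE11 (A a) (C a) ≤ marginE11 (A t) (C t) :=
    marginE11_le_marginE11 (h.sol.A_pos ha) (h.sol.A_pos ht)
      ((div_le_div_iff₀ (h.sol.C_pos ht) (h.sol.C_pos ha)).1 hratio)
  exact ⟨hmargin.trans_lt
      (marginE11_lt_decayE11 (h.sol.C_pos ht) (h.C_lt_A t ht) (h.A_lt_three_mul_C t ht)),
    decayE11_lt_thirty_two (h.sol.A_pos ht) (h.sol.C_pos ht) (h.C_lt_A t ht).ne'⟩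

lemma antitoneOn_B (h : IsConeSolE11 A B C S) : AntitoneOn B S := by
  refine antitoneOn_of_hasDerivAt_nonpos h.convex
    (fun t ht ↦ (h.sol.hasDerivAt_B ht).differentiableAt.hasDerivAt) fun t ht ↦ ?_
  have hdecay : 0 < decayE11 (A t) (C t) :=
    (h.margin_pos ht).trans (h.decay_mem_Ioo ht ht le_rfl).1
  have hBB' : B t * deriv B t < 0 := by rw [h.sol.mul_deriv_B ht]; exact neg_lt_zero.2 hdecay
  exact ((pos_iff_neg_of_mul_neg hBB').1 (h.sol.B_pos ht)).le

lemma antitoneOn_A_mul_B (h : IsConeSolE11 A B C S) : AntitoneOn (fun t ↦ A t * B t) S := by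
  refine antitoneOn_of_hasDerivAt_nonpos h.convex (fun t ↦ h.sol.hasDerivAt_A_mul_B)
    fun t ht ↦ ?_
  have := h.sol.A_pos ht
  have := h.sol.B_pos ht
  have := h.sol.rate_pos ht
  have := sub_pos.2 (h.C_lt_A t ht)
  have := sub_pos.2 (h.A_lt_three_mul_C t ht)
  exact neg_nonpos.2 (by positivity)

lemma mul_B_mem_Icc (h : IsConeSolE11 A B C S) (ha : a ∈ S) (ht : t ∈ S) (hat : a ≤ t) :
    A t * B t ∈ Icc (C a * B a) (A a * B a) ∧ C t * B t ∈ Icc (C a * B a) (A a * B a) := by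
  have hAB : A t * B t ≤ A a * B a := h.antitoneOn_A_mul_B ha ht hat
  have hCB : C a * B a ≤ C t * B t := h.sol.monotoneOn_C_mul_B h.convex h.C_lt_A ha ht hat
  have hCA : C t * B t ≤ A t * B t :=
    mul_le_mul_of_nonneg_right (h.C_lt_A t ht).le (h.sol.B_pos ht).le
  exact ⟨⟨hCB.trans hCA, hAB⟩, ⟨hCB, hCA.trans hAB⟩⟩

lemma sub_le_sq_div (h : IsConeSolE11 A B C S) (ha : a ∈ S) (ht : t ∈ S) (hat : a ≤ t) :
    t - a ≤ B a ^ 2 / (2 * marginE11 (A a) (C a)) := by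
  have hmargin := h.margin_pos ha
  rcases hat.eq_or_lt with rfl | hat
  · rw [sub_self]
    positivity
  have hIcc : Icc a t ⊆ S := h.convex.ordConnected.out ha ht
  obtain ⟨c, hc, hslope⟩ := exists_hasDerivAt_mul_eq_sub_of_tendsto_nhdsLT hat
    (fun s hs ↦ h.sol.hasDerivAt_B_sq (hIcc (Ico_subset_Icc_self hs)))
    ((h.sol.hasDerivAt_B_sq ht).continuousAt.mono_left nhdsWithin_le_nhds)
  have hdecay := (h.decay_mem_Ioo ha (hIcc (Ioo_subset_Icc_self hc)) hc.1.le).1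
  rw [le_div_iff₀ (by positivity)]
  linarith [mul_lt_mul_of_pos_left hdecay (sub_pos.2 hat), sq_nonneg (B t)]

/-! ### Behaviour at the final time -/

lemma B_sq_mem_Ioo (h : IsConeSolE11 A B C (Ico a T)) (hB : Tendsto B (𝓝[<] T) (𝓝 0))
    (ht : t ∈ Ico a T) :
    B t ^ 2 ∈ Ioo (2 * marginE11 (A a) (C a) * (T - t)) (64 * (T - t)) := by
  obtain ⟨c, hc, hslope⟩ := exists_hasDerivAt_mul_eq_sub_of_tendsto_nhdsLT ht.2
    (fun s hs ↦ h.sol.hasDerivAt_B_sq (Ico_subset_Ico_left ht.1 hs)) (hB.pow 2)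
  have hac : a ≤ c := ht.1.trans hc.1.le
  obtain ⟨hlower, hupper⟩ :=
    h.decay_mem_Ioo (left_mem_Ico.2 (ht.1.trans_lt ht.2)) ⟨hac, hc.2⟩ hac
  have hpos : 0 < T - t := sub_pos.2 ht.2
  constructor
  · linarith [mul_lt_mul_of_pos_left hlower hpos]
  · linarith [mul_lt_mul_of_pos_left hupper hpos]

lemma exists_tendsto_mem_octantE11 (h : IsConeSolE11 A B C (Ico a T)) (haT : a < T) {b : ℝ}
    (hb : 0 < b) (hB : Tendsto B (𝓝[<] T) (𝓝 b)) :
    ∃ p ∈ octantE11, Tendsto (fun t ↦ (A t, B t, C t)) (𝓝[<] T) (𝓝 p) := by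
  have ha : a ∈ Ico a T := left_mem_Ico.2 haT
  have hCB_pos : 0 < C a * B a := mul_pos (h.sol.C_pos ha) (h.sol.B_pos ha)
  obtain ⟨k, hk, hAB⟩ := exists_mem_Icc_tendsto_nhdsLT_of_antitoneOn haT h.antitoneOn_A_mul_B
    fun t ht ↦ (h.mul_B_mem_Icc ha ht ht.1).1
  obtain ⟨l, hl, hCB⟩ := exists_mem_Icc_tendsto_nhdsLT_of_monotoneOn haT
    (h.sol.monotoneOn_C_mul_B h.convex h.C_lt_A) fun t ht ↦ (h.mul_B_mem_Icc ha ht ht.1).2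
  refine ⟨(k / b, b, l / b),
    ⟨div_pos (hCB_pos.trans_le hk.1) hb, hb, div_pos (hCB_pos.trans_le hl.1) hb⟩, ?_⟩
  refine ((hAB.div hB hb.ne').prodMk_nhds (hB.prodMk_nhds (hCB.div hB hb.ne'))).congr' ?_
  filter_upwards [Ico_mem_nhdsLT haT] with t ht
  have hBt : B t ≠ 0 := (h.sol.B_pos ht).ne'
  simp only [Pi.div_apply, mul_div_cancel_right₀ _ hBt]

lemma tendsto_B_zero (h : IsConeSolE11 A B C (Ico 0 T)) (hT : 0 < T)
    (hmax : IsMaxSolE11 A B C T) : Tendsto B (𝓝[<] T) (𝓝 0) := by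
  have hmaps : MapsTo B (Ico 0 T) (Icc 0 (B 0)) := fun t ht ↦
    ⟨(h.sol.B_pos ht).le, h.antitoneOn_B (left_mem_Ico.2 hT) ht ht.1⟩
  obtain ⟨b, hb, hB⟩ := exists_mem_Icc_tendsto_nhdsLT_of_antitoneOn hT h.antitoneOn_B hmaps
  rcases hb.1.eq_or_lt with rfl | hb_pos
  · exact hB
  · obtain ⟨p, hp, hlim⟩ := h.exists_tendsto_mem_octantE11 hT hb_pos hB
    exact absurd hlim (hmax.not_tendsto_mem_octantE11 hT hp)

lemma tendsto_C_atTop (h : IsConeSolE11 A B C (Ico a T)) (haT : a < T)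
    (hB : Tendsto B (𝓝[<] T) (𝓝 0)) : Tendsto C (𝓝[<] T) atTop := by
  have ha : a ∈ Ico a T := left_mem_Ico.2 haT
  have hIco : ∀ᶠ t in 𝓝[<] T, t ∈ Ico a T := Ico_mem_nhdsLT haT
  have hB_pos : Tendsto B (𝓝[<] T) (𝓝[>] 0) :=
    tendsto_nhdsWithin_iff.2 ⟨hB, hIco.mono fun t ↦ h.sol.B_pos⟩
  refine tendsto_atTop_mono' _ ?_ (hB_pos.inv_tendsto_nhdsGT_zero.const_mul_atTop
    (mul_pos (h.sol.C_pos ha) (h.sol.B_pos ha)))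
  filter_upwards [hIco] with t ht
  exact (mul_inv_le_iff₀ (h.sol.B_pos ht)).2 (h.mul_B_mem_Icc ha ht ht.1).2.1

lemma tendsto_A_atTop (h : IsConeSolE11 A B C (Ico a T)) (haT : a < T)
    (hB : Tendsto B (𝓝[<] T) (𝓝 0)) : Tendsto A (𝓝[<] T) atTop :=
  tendsto_atTop_mono' _ (mem_of_superset (Ico_mem_nhdsLT haT) fun t ht ↦ (h.C_lt_A t ht).le)
    (h.tendsto_C_atTop haT hB)

end IsConeSolE11

end

/-- For a maximal positive solution of the `E(1,1)` negative cross curvature flow with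
`A0 > C0 > 0` and `3C0 > A0`, setting `E0 = 16(3C0 - A0)/A0`: one has
`B·(dB/dt) ∈ (-128, -E0)` along the flow, the solution exists only up to a finite time
`T0 > 0`, `2E0(T0 - t) < B² < 256(T0 - t)` on `[0, T0)`, `B → 0` and `A, C → ∞` as
`t → T0⁻`. -/
theorem sol_E11_blowup_symmetric_cone
    (A0 B0 C0 : ℝ) (hB0 : 0 < B0) (hC0 : 0 < C0)
    (hA0C0 : A0 > C0) (h3C0 : 3 * C0 > A0)
    (E0 : ℝ) (hE0 : E0 = 16 * (3 * C0 - A0) / A0)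
    (A B C : ℝ → ℝ) (T : EReal) (hT : 0 < T)
    (hmax : IsMaxSolE11 A B C T)
    (hinitA : A 0 = A0) (hinitB : B 0 = B0) (hinitC : C 0 = C0) :
    (∀ t : ℝ, 0 ≤ t → (t : EReal) < T →
      B t * deriv B t ∈ Set.Ioo (-128 : ℝ) (-E0)) ∧
    ∃ T0 : ℝ, 0 < T0 ∧ T = (T0 : EReal) ∧
      (∀ t : ℝ, 0 ≤ t → t < T0 →
        2 * E0 * (T0 - t) < B t ^ 2 ∧ B t ^ 2 < 256 * (T0 - t)) ∧
      Filter.Tendsto B (nhdsWithin T0 (Set.Iio T0)) (nhds 0) ∧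
      Filter.Tendsto A (nhdsWithin T0 (Set.Iio T0)) Filter.atTop ∧
      Filter.Tendsto C (nhdsWithin T0 (Set.Iio T0)) Filter.atTop := by
  have hsol := hmax.1
  have h0 : IsLeast {t : ℝ | 0 ≤ t ∧ (t : EReal) < T} 0 := ⟨⟨le_rfl, hT⟩, fun t ht ↦ ht.1⟩
  have hcone := hsol.isConeSolE11 (convex_setOf_nonneg_and_coe_lt T) h0
    (by rwa [hinitA, hinitC]) (by rwa [hinitA, hinitC])
  have hE : E0 = marginE11 (A 0) (C 0) := by rw [hE0, hinitA, hinitC, marginE11]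
  subst hE
  refine ⟨fun t ht0 htT ↦ ?_, ?_⟩
  · obtain ⟨hlower, hupper⟩ := hcone.decay_mem_Ioo h0.1 ⟨ht0, htT⟩ ht0
    rw [hsol.mul_deriv_B ⟨ht0, htT⟩]
    exact ⟨by linarith, neg_lt_neg hlower⟩
  obtain ⟨T0, hT0, rfl⟩ := exists_real_eq_of_forall_coe_lt_le hT fun t ht0 htT ↦ by
    simpa using hcone.sub_le_sq_div h0.1 ⟨ht0, htT⟩ ht0
  rw [setOf_nonneg_and_coe_lt_coe] at hcone
  have hB := hcone.tendsto_B_zero hT0 hmax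
  refine ⟨T0, hT0, rfl, fun t ht0 htT ↦ ?_, hB,
    hcone.tendsto_A_atTop hT0 hB, hcone.tendsto_C_atTop hT0 hB⟩
  obtain ⟨hlower, hupper⟩ := hcone.B_sq_mem_Ioo hB ⟨ht0, htT⟩
  exact ⟨hlower, by linarith⟩
end

section
/- Let A, B, C be positive differentiable functions on [0, T) solving the SU(2) negative cross curvature flow ODE system with A_0 ≥ B_0 ≥ C_0 > 0. Then A ≥ B ≥ C on [0, T), and the functions A, A - B, A - C, A/B and A/C are all (weakly) decreasing on [0, T). -/
/-!
The system is symmetric under permutations of `A`, `B`, `C`, so it suffices to treat the pair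
`A`, `B`. Their difference solves a linear homogeneous equation,
`(A - B)' = 2Z((A + B - C)² + 4AB) / (ABC)² * (A - B)`, hence is a positive multiple of its value
at any one time: all order relations between `A`, `B`, `C` are constant in time.

If `A` is the largest of the three, then `Y = -(B + C - A)² - 4B(A - B) ≤ 0`, and `Z ≤ 0` by
symmetry. This gives `A' ≤ 0` and `(A - B)' ≤ 0`, and since `X - Y = 4(A - B)(A + B - C) ≥ 0` also
`(A/B)' = A/B * 2Z(X - Y) / (ABC)² ≤ 0`.
-/

/-- The quantity `X = 3A² - (B-C)² - 2AB - 2AC` of the `SU(2)` cross curvature tensor. -/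
def su2X (A B C : ℝ) : ℝ := 3 * A ^ 2 - (B - C) ^ 2 - 2 * A * B - 2 * A * C

/-- The quantity `Y = 3B² - (A-C)² - 2AB - 2BC` of the `SU(2)` cross curvature tensor. -/
def su2Y (A B C : ℝ) : ℝ := 3 * B ^ 2 - (A - C) ^ 2 - 2 * A * B - 2 * B * C

/-- The quantity `Z = 3C² - (A-B)² - 2BC - 2AC` of the `SU(2)` cross curvature tensor. -/
def su2Z (A B C : ℝ) : ℝ := 3 * C ^ 2 - (A - B) ^ 2 - 2 * B * C - 2 * A * C

open Set

section LinearODE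

variable {s : Set ℝ} {t₀ t : ℝ}

lemma eq_exp_integral_smul_of_hasDerivWithinAt {E : Type*} [NormedAddCommGroup E] [NormedSpace ℝ E]
    {f : ℝ → E} {g : ℝ → ℝ} (hs : s.OrdConnected) (hg : ContinuousOn g s)
    (hf : ∀ x ∈ s, HasDerivWithinAt f (g x • f x) s x) (ht₀ : t₀ ∈ s) (ht : t ∈ s) :
    f t = Real.exp (∫ x in t₀..t, g x) • f t₀ := by
  have hsub : uIcc t₀ t ⊆ s := hs.uIcc_subset ht₀ ht
  have hG : ∀ x ∈ uIcc t₀ t,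
      HasDerivWithinAt (fun u ↦ ∫ y in t₀..u, g y) (g x) (uIcc t₀ t) x := by
    intro x hx
    have : Fact (x ∈ uIcc t₀ t) := ⟨hx⟩
    exact intervalIntegral.integral_hasDerivWithinAt_right
      (hg.mono (hs.uIcc_subset ht₀ (hsub hx))).intervalIntegrable
      ((hg.mono hsub).stronglyMeasurableAtFilter_nhdsWithin measurableSet_Icc x)
      (hg.mono hsub x hx)
  have hderiv : ∀ x ∈ uIcc t₀ t, HasDerivWithinAt
      (fun u ↦ Real.exp (-∫ y in t₀..u, g y) • f u) 0 (uIcc t₀ t) x := by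
    intro x hx
    refine ((hG x hx).fun_neg.exp.smul ((hf x (hsub hx)).mono hsub)).congr_deriv ?_
    module
  have hconst : Real.exp (-∫ x in t₀..t, g x) • f t = f t₀ := by
    have hle := (convex_uIcc t₀ t).norm_image_sub_le_of_norm_hasDerivWithin_le hderiv
      (fun _ _ ↦ norm_zero.le) left_mem_uIcc right_mem_uIcc
    simpa [sub_eq_zero] using hle
  rw [← hconst, smul_smul, ← Real.exp_add, add_neg_cancel, Real.exp_zero, one_smul]

lemma nonneg_iff_nonneg_of_hasDerivWithinAt_mul {f g : ℝ → ℝ} (hs : s.OrdConnected)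
    (hg : ContinuousOn g s) (hf : ∀ x ∈ s, HasDerivWithinAt f (g x * f x) s x)
    (ht₀ : t₀ ∈ s) (ht : t ∈ s) : 0 ≤ f t ↔ 0 ≤ f t₀ := by
  rw [eq_exp_integral_smul_of_hasDerivWithinAt hs hg hf ht₀ ht, smul_eq_mul,
    mul_nonneg_iff_of_pos_left (Real.exp_pos _)]

end LinearODE

lemma antitoneOn_of_forall_hasDerivWithinAt_nonpos {s : Set ℝ} {f f' : ℝ → ℝ}
    (hs : s.OrdConnected) (hf : ∀ t ∈ s, HasDerivWithinAt f (f' t) s t)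
    (hf' : ∀ t ∈ s, f' t ≤ 0) : AntitoneOn f s :=
  antitoneOn_of_hasDerivWithinAt_nonpos hs.convex (fun t ht ↦ (hf t ht).continuousWithinAt)
    (fun t ht ↦ (hf t (interior_subset ht)).mono interior_subset)
    (fun t ht ↦ hf' t (interior_subset ht))

section Curvature

variable {a b c : ℝ}

lemma su2Y_nonpos (hb : 0 ≤ b) (hba : b ≤ a) : su2Y a b c ≤ 0 :=
  calc su2Y a b c = -((b + c - a) ^ 2 + 4 * (b * (a - b))) := by unfold su2Y; ring
    _ ≤ 0 := neg_nonpos.2 <|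
      add_nonneg (sq_nonneg _) (mul_nonneg zero_le_four (mul_nonneg hb (sub_nonneg.2 hba)))

lemma su2Y_swap_right (a b c : ℝ) : su2Y a c b = su2Z a b c := by
  unfold su2Y su2Z
  ring

lemma su2Z_nonpos (hc : 0 ≤ c) (hca : c ≤ a) : su2Z a b c ≤ 0 :=
  su2Y_swap_right a b c ▸ su2Y_nonpos hc hca

lemma su2X_sub_su2Y (a b c : ℝ) : su2X a b c - su2Y a b c = 4 * (a - b) * (a + b - c) := by
  unfold su2X su2Y
  ring

/-- The logarithmic derivative of `A - B` along the flow, extended to the locus `A = B` by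
cancelling the common factor `A - B`. -/
noncomputable def su2SubRate (a b c : ℝ) : ℝ :=
  2 * su2Z a b c * ((a + b - c) ^ 2 + 4 * a * b) / (a * b * c) ^ 2

lemma su2SubRate_nonpos (ha : 0 ≤ a) (hb : 0 ≤ b) (hZ : su2Z a b c ≤ 0) :
    su2SubRate a b c ≤ 0 := by
  have hnum : 2 * su2Z a b c * ((a + b - c) ^ 2 + 4 * a * b) ≤ 0 :=
    mul_nonpos_of_nonpos_of_nonneg (by linarith) (by positivity)
  exact div_nonpos_of_nonpos_of_nonneg hnum (sq_nonneg _)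

end Curvature

/-- A positive solution `(A, B, C)` of the `SU(2)` negative cross curvature flow on the time set
`s`, with derivatives taken within `s`, so that they are one-sided at an endpoint of an interval. -/
structure IsSU2CrossCurvatureFlow (A B C : ℝ → ℝ) (s : Set ℝ) : Prop where
  pos_fst : ∀ t ∈ s, 0 < A t
  pos_snd : ∀ t ∈ s, 0 < B t
  pos_thd : ∀ t ∈ s, 0 < C t
  hasDerivWithinAt_fst : ∀ t ∈ s, HasDerivWithinAt A
    (-2 * A t * su2Y (A t) (B t) (C t) * su2Z (A t) (B t) (C t) / (A t * B t * C t) ^ 2) s t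
  hasDerivWithinAt_snd : ∀ t ∈ s, HasDerivWithinAt B
    (-2 * B t * su2Z (A t) (B t) (C t) * su2X (A t) (B t) (C t) / (A t * B t * C t) ^ 2) s t
  hasDerivWithinAt_thd : ∀ t ∈ s, HasDerivWithinAt C
    (-2 * C t * su2X (A t) (B t) (C t) * su2Y (A t) (B t) (C t) / (A t * B t * C t) ^ 2) s t

namespace IsSU2CrossCurvatureFlow

variable {A B C : ℝ → ℝ} {s : Set ℝ} {t₀ t : ℝ}

lemma swap_right (h : IsSU2CrossCurvatureFlow A B C s) : IsSU2CrossCurvatureFlow A C B s where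
  pos_fst := h.pos_fst
  pos_snd := h.pos_thd
  pos_thd := h.pos_snd
  hasDerivWithinAt_fst t ht := (h.hasDerivWithinAt_fst t ht).congr_deriv <| by
    simp only [su2Y, su2Z]; ring
  hasDerivWithinAt_snd t ht := (h.hasDerivWithinAt_thd t ht).congr_deriv <| by
    simp only [su2X, su2Y, su2Z]; ring
  hasDerivWithinAt_thd t ht := (h.hasDerivWithinAt_snd t ht).congr_deriv <| by
    simp only [su2X, su2Y, su2Z]; ring

lemma rotate (h : IsSU2CrossCurvatureFlow A B C s) : IsSU2CrossCurvatureFlow B C A s where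
  pos_fst := h.pos_snd
  pos_snd := h.pos_thd
  pos_thd := h.pos_fst
  hasDerivWithinAt_fst t ht := (h.hasDerivWithinAt_snd t ht).congr_deriv <| by
    simp only [su2X, su2Y, su2Z]; ring
  hasDerivWithinAt_snd t ht := (h.hasDerivWithinAt_thd t ht).congr_deriv <| by
    simp only [su2X, su2Y, su2Z]; ring
  hasDerivWithinAt_thd t ht := (h.hasDerivWithinAt_fst t ht).congr_deriv <| by
    simp only [su2X, su2Y, su2Z]; ring

lemma hasDerivWithinAt_sub (h : IsSU2CrossCurvatureFlow A B C s) (ht : t ∈ s) :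
    HasDerivWithinAt (fun t ↦ A t - B t)
      (su2SubRate (A t) (B t) (C t) * (A t - B t)) s t := by
  refine ((h.hasDerivWithinAt_fst t ht).sub (h.hasDerivWithinAt_snd t ht)).congr_deriv ?_
  simp only [su2SubRate, su2X, su2Y]
  ring

lemma hasDerivWithinAt_div (h : IsSU2CrossCurvatureFlow A B C s) (ht : t ∈ s) :
    HasDerivWithinAt (fun t ↦ A t / B t)
      (A t / B t * (2 * su2Z (A t) (B t) (C t) *
        (su2X (A t) (B t) (C t) - su2Y (A t) (B t) (C t)) / (A t * B t * C t) ^ 2)) s t := by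
  have hB : B t ≠ 0 := (h.pos_snd t ht).ne'
  refine ((h.hasDerivWithinAt_fst t ht).div (h.hasDerivWithinAt_snd t ht) hB).congr_deriv ?_
  field_simp
  ring

lemma continuousOn_su2SubRate (h : IsSU2CrossCurvatureFlow A B C s) :
    ContinuousOn (fun t ↦ su2SubRate (A t) (B t) (C t)) s := by
  have hA : ContinuousOn A s := fun t ht ↦ (h.hasDerivWithinAt_fst t ht).continuousWithinAt
  have hB : ContinuousOn B s := fun t ht ↦ (h.hasDerivWithinAt_snd t ht).continuousWithinAt
  have hC : ContinuousOn C s := fun t ht ↦ (h.hasDerivWithinAt_thd t ht).continuousWithinAt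
  have hABC : ∀ t ∈ s, (A t * B t * C t) ^ 2 ≠ 0 := fun t ht ↦
    pow_ne_zero 2 (mul_pos (mul_pos (h.pos_fst t ht) (h.pos_snd t ht)) (h.pos_thd t ht)).ne'
  unfold su2SubRate su2Z
  fun_prop (disch := assumption)

lemma snd_le_fst_iff (h : IsSU2CrossCurvatureFlow A B C s) (hs : s.OrdConnected)
    (ht₀ : t₀ ∈ s) (ht : t ∈ s) : B t ≤ A t ↔ B t₀ ≤ A t₀ := by
  simpa only [sub_nonneg] using nonneg_iff_nonneg_of_hasDerivWithinAt_mul hs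
    h.continuousOn_su2SubRate (fun _ ↦ h.hasDerivWithinAt_sub) ht₀ ht

lemma antitoneOn_fst (h : IsSU2CrossCurvatureFlow A B C s) (hs : s.OrdConnected)
    (hBA : ∀ t ∈ s, B t ≤ A t) (hCA : ∀ t ∈ s, C t ≤ A t) : AntitoneOn A s := by
  refine antitoneOn_of_forall_hasDerivWithinAt_nonpos hs h.hasDerivWithinAt_fst fun t ht ↦ ?_
  have hY : su2Y (A t) (B t) (C t) ≤ 0 := su2Y_nonpos (h.pos_snd t ht).le (hBA t ht)
  have hZ : su2Z (A t) (B t) (C t) ≤ 0 := su2Z_nonpos (h.pos_thd t ht).le (hCA t ht)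
  have hAY : 0 ≤ -2 * A t * su2Y (A t) (B t) (C t) :=
    mul_nonneg_of_nonpos_of_nonpos (by linarith [h.pos_fst t ht]) hY
  exact div_nonpos_of_nonpos_of_nonneg (mul_nonpos_of_nonneg_of_nonpos hAY hZ) (sq_nonneg _)

lemma antitoneOn_sub (h : IsSU2CrossCurvatureFlow A B C s) (hs : s.OrdConnected)
    (hBA : ∀ t ∈ s, B t ≤ A t) (hCA : ∀ t ∈ s, C t ≤ A t) :
    AntitoneOn (fun t ↦ A t - B t) s := by
  refine antitoneOn_of_forall_hasDerivWithinAt_nonpos hs (fun _ ↦ h.hasDerivWithinAt_sub)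
    fun t ht ↦ mul_nonpos_of_nonpos_of_nonneg ?_ (sub_nonneg.2 (hBA t ht))
  exact su2SubRate_nonpos (h.pos_fst t ht).le (h.pos_snd t ht).le
    (su2Z_nonpos (h.pos_thd t ht).le (hCA t ht))

lemma antitoneOn_div (h : IsSU2CrossCurvatureFlow A B C s) (hs : s.OrdConnected)
    (hBA : ∀ t ∈ s, B t ≤ A t) (hCA : ∀ t ∈ s, C t ≤ A t) :
    AntitoneOn (fun t ↦ A t / B t) s := by
  refine antitoneOn_of_forall_hasDerivWithinAt_nonpos hs (fun _ ↦ h.hasDerivWithinAt_div)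
    fun t ht ↦ ?_
  have hA := h.pos_fst t ht
  have hB := h.pos_snd t ht
  have hZ : su2Z (A t) (B t) (C t) ≤ 0 := su2Z_nonpos (h.pos_thd t ht).le (hCA t ht)
  have hXY : 0 ≤ su2X (A t) (B t) (C t) - su2Y (A t) (B t) (C t) := by
    rw [su2X_sub_su2Y]
    exact mul_nonneg (by linarith [hBA t ht]) (by linarith [hCA t ht])
  refine mul_nonpos_of_nonneg_of_nonpos (by positivity)
    (div_nonpos_of_nonpos_of_nonneg ?_ (sq_nonneg _))
  exact mul_nonpos_of_nonpos_of_nonneg (by linarith) hXY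

end IsSU2CrossCurvatureFlow

theorem su2_monotone_quantities_general {A B C : ℝ → ℝ} {s : Set ℝ} {t₀ : ℝ}
    (h : IsSU2CrossCurvatureFlow A B C s) (hs : s.OrdConnected) (ht₀ : t₀ ∈ s)
    (hBA : B t₀ ≤ A t₀) (hCA : C t₀ ≤ A t₀) :
    (∀ t ∈ s, B t ≤ A t ∧ C t ≤ A t ∧ (C t ≤ B t ↔ C t₀ ≤ B t₀)) ∧
    AntitoneOn A s ∧
    AntitoneOn (fun t ↦ A t - B t) s ∧
    AntitoneOn (fun t ↦ A t - C t) s ∧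
    AntitoneOn (fun t ↦ A t / B t) s ∧
    AntitoneOn (fun t ↦ A t / C t) s := by
  have hBA' : ∀ t ∈ s, B t ≤ A t := fun t ht ↦ (h.snd_le_fst_iff hs ht₀ ht).2 hBA
  have hCA' : ∀ t ∈ s, C t ≤ A t := fun t ht ↦ (h.swap_right.snd_le_fst_iff hs ht₀ ht).2 hCA
  exact ⟨fun t ht ↦ ⟨hBA' t ht, hCA' t ht, h.rotate.snd_le_fst_iff hs ht₀ ht⟩,
    h.antitoneOn_fst hs hBA' hCA',
    h.antitoneOn_sub hs hBA' hCA', h.swap_right.antitoneOn_sub hs hCA' hBA',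
    h.antitoneOn_div hs hBA' hCA', h.swap_right.antitoneOn_div hs hCA' hBA'⟩

/-- Along a positive solution of the `SU(2)` negative cross curvature flow ODE system on
`[0, T)` with `A0 ≥ B0 ≥ C0 > 0`: the ordering `A ≥ B ≥ C` is preserved and the
quantities `A`, `A - B`, `A - C`, `A/B`, `A/C` are all (weakly) decreasing. -/
theorem su2_monotone_quantities
    (T A0 B0 C0 : ℝ) (hT : 0 < T)
    (hC0 : 0 < C0) (hBC0 : B0 ≥ C0) (hAB0 : A0 ≥ B0)
    (A B C : ℝ → ℝ)
    (hinitA : A 0 = A0) (hinitB : B 0 = B0) (hinitC : C 0 = C0)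
    (hsol : ∀ t ∈ Set.Ico (0 : ℝ) T,
      (0 < A t ∧ 0 < B t ∧ 0 < C t) ∧
      HasDerivAt A
        (-2 * A t * su2Y (A t) (B t) (C t) * su2Z (A t) (B t) (C t) /
          (A t * B t * C t) ^ 2) t ∧
      HasDerivAt B
        (-2 * B t * su2Z (A t) (B t) (C t) * su2X (A t) (B t) (C t) /
          (A t * B t * C t) ^ 2) t ∧
      HasDerivAt C
        (-2 * C t * su2X (A t) (B t) (C t) * su2Y (A t) (B t) (C t) /
          (A t * B t * C t) ^ 2) t) :
    (∀ t ∈ Set.Ico (0 : ℝ) T, A t ≥ B t ∧ B t ≥ C t) ∧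
    AntitoneOn A (Set.Ico (0 : ℝ) T) ∧
    AntitoneOn (fun t => A t - B t) (Set.Ico (0 : ℝ) T) ∧
    AntitoneOn (fun t => A t - C t) (Set.Ico (0 : ℝ) T) ∧
    AntitoneOn (fun t => A t / B t) (Set.Ico (0 : ℝ) T) ∧
    AntitoneOn (fun t => A t / C t) (Set.Ico (0 : ℝ) T) := by
  subst hinitA hinitB hinitC
  have hflow : IsSU2CrossCurvatureFlow A B C (Ico 0 T) :=
    ⟨fun t ht ↦ (hsol t ht).1.1, fun t ht ↦ (hsol t ht).1.2.1, fun t ht ↦ (hsol t ht).1.2.2,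
      fun t ht ↦ (hsol t ht).2.1.hasDerivWithinAt, fun t ht ↦ (hsol t ht).2.2.1.hasDerivWithinAt,
      fun t ht ↦ (hsol t ht).2.2.2.hasDerivWithinAt⟩
  obtain ⟨horder, hantitone⟩ := su2_monotone_quantities_general hflow ordConnected_Ico
    (left_mem_Ico.2 hT) hAB0 (hBC0.trans hAB0)
  exact ⟨fun t ht ↦ ⟨(horder t ht).1, (horder t ht).2.2.2 hBC0⟩, hantitone⟩
end
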